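/- Let S be a set of 2k points in the plane in general position. If the number of non-crossing perfect matchings of S equals the k-th Catalan number C_k, then either S is in convex position, or k = 3 and S has the exceptional order type: exactly one point Q of S lies in the interior of the convex hull of S, and for every other point P of S, each of the two open half-planes bounded by the line through Q and P contains exactly 2 points of S. -/

import Mathlib

open scoped Classical

/-- Points in the plane. -/
abbrev Pt : Type := ℝ × ℝ

/-- A finite planar point set is in *general position* if no three of its
points are collinear. -/
def GeneralPosition (S : Finset Pt) : Prop :=
  ∀ p ∈ S, ∀ q ∈ S, ∀ r ∈ S, p ≠ q → p ≠ r → q ≠ r →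
    ¬ Collinear ℝ ({p, q, r} : Set Pt)

/-- The closed straight-line segment spanned by an unordered pair of points. -/
noncomputable def seg : Sym2 Pt → Set Pt :=
  Sym2.lift ⟨fun a b => segment ℝ a b, fun a b => segment_symm ℝ a b⟩

/-- `M` is a non-crossing perfect matching of `S`: a partition of `S` into
unordered pairs (of distinct points) whose closed segments are pairwise disjoint. -/
def IsNCMatching (S : Finset Pt) (M : Finset (Sym2 Pt)) : Prop :=
  (∀ e ∈ M, ¬ e.IsDiag) ∧
  (∀ e ∈ M, ∀ p, p ∈ e → p ∈ S) ∧
  (∀ p ∈ S, ∃! e, e ∈ M ∧ p ∈ e) ∧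
  (∀ e ∈ M, ∀ f ∈ M, e ≠ f → Disjoint (seg e) (seg f))

/-- The number of non-crossing perfect matchings of `S`. -/
noncomputable def pm (S : Finset Pt) : ℕ :=
  Set.ncard {M : Finset (Sym2 Pt) | IsNCMatching S M}

/-- `S` is in convex position: no point of `S` lies in the convex hull of the
other points. -/
def ConvexPosition (S : Finset Pt) : Prop :=
  ∀ p ∈ S, p ∉ convexHull ℝ (↑(S.erase p) : Set Pt)

/-- The signed side of `X` with respect to the directed line from `Q` to `P`.
The two open half-planes bounded by the line through `Q` and `P` are
`{X | 0 < sideOf Q P X}` and `{X | sideOf Q P X < 0}`. -/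
def sideOf (Q P X : Pt) : ℝ :=
  (P.1 - Q.1) * (X.2 - Q.2) - (P.2 - Q.2) * (X.1 - Q.1)

/-- Segment `AB` pierces segment `CD`: the closed segments are disjoint, but the
affine line through `A` and `B` meets the closed segment `CD`. -/
def Pierces (A B C D : Pt) : Prop :=
  Disjoint (segment ℝ A B) (segment ℝ C D) ∧
  ((affineSpan ℝ ({A, B} : Set Pt) : Set Pt) ∩ segment ℝ C D).Nonempty

/-- The matching `M` of `S` has the *piercing property*: it contains pairs
`{A,B}` and `{C,D}` with `A` on the boundary of the convex hull of `S`
and `AB` piercing `CD`. -/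
def HasPiercing (S : Finset Pt) (M : Finset (Sym2 Pt)) : Prop :=
  ∃ A B C D : Pt, s(A, B) ∈ M ∧ s(C, D) ∈ M ∧
    A ∈ frontier (convexHull ℝ (S : Set Pt)) ∧ Pierces A B C D

/-- The exceptional order type with interior point `Q`: `Q` is the unique point
of `S` interior to the convex hull of `S`, and for every other point `P` of `S`
each open half-plane bounded by the line through `Q` and `P` contains exactly
two points of `S`. -/
def ExceptionalAt (S : Finset Pt) (Q : Pt) : Prop :=
  (↑S ∩ interior (convexHull ℝ (S : Set Pt))) = {Q} ∧
  ∀ P ∈ S, P ≠ Q →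
    (S.filter (fun X => 0 < sideOf Q P X)).card = 2 ∧
    (S.filter (fun X => sideOf Q P X < 0)).card = 2

/-- The exceptional order type of Figure 1. -/
def Exceptional (S : Finset Pt) : Prop :=
  ∃ Q ∈ S, ExceptionalAt S Q

/-!
Around a vertex `A` of the convex hull the other points are linearly ordered by angle. Pairing `A`
with a point of even rank and matching the two sides of the resulting line independently reproduces
the Catalan recursion, so the matchings in which the line through `A` and its partner separates no
other pair already number at least `C_k`. If the total is `C_k`, then in no matching does the line
through a hull vertex and its partner separate another pair.

Suppose now that `Q` is an inner point, `A` a hull vertex and `CD` the hull edge through which the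
ray `AQ` leaves the hull. If the rank of `Q` around `A` were odd, matching `A` with `Q` and `C` with
`D` would leave an even number of points on either side, giving a forbidden matching; so the rank is
even, and the points next to `Q` in the order, having odd rank, are hull vertices and must be `C`
and `D`. Applying the same to `S \ {C, D}`, where the parity has changed, shows that `Q` is not an
inner point of that set. Hence walking along the hull does not increase the rank of `Q`, and
decreases it after two steps unless it is `2`. Starting from rank `2` at `A`, the walk `A, B, C, D`
keeps the rank at most `2`, and this leaves room for only six points.
-/

open scoped Finset

section Orientation

theorem sideOf_rotate (a b c : Pt) : sideOf b c a = sideOf a b c := by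
  unfold sideOf; ring

theorem sideOf_swap_left (a b c : Pt) : sideOf b a c = -sideOf a b c := by
  unfold sideOf; ring

theorem sideOf_swap_right (a b c : Pt) : sideOf a c b = -sideOf a b c := by
  unfold sideOf; ring

@[simp] theorem sideOf_self_left (a b : Pt) : sideOf a a b = 0 := by
  unfold sideOf; ring

@[simp] theorem sideOf_self_outer (a b : Pt) : sideOf a b a = 0 := by
  unfold sideOf; ring

@[simp] theorem sideOf_self_right (a b : Pt) : sideOf a b b = 0 := by
  unfold sideOf; ring

theorem sideOf_smul_add_smul (U V x y : Pt) {a b : ℝ} (hab : a + b = 1) :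
    sideOf U V (a • x + b • y) = a * sideOf U V x + b * sideOf U V y := by
  simp only [sideOf, Prod.fst_add, Prod.snd_add, Prod.smul_fst, Prod.smul_snd, smul_eq_mul]
  linear_combination ((V.1 - U.1) * U.2 - (V.2 - U.2) * U.1) * hab

theorem sideOf_add_sideOf_add_sideOf (X Y Z P : Pt) :
    sideOf Y Z P + sideOf Z X P + sideOf X Y P = sideOf X Y Z := by
  unfold sideOf; ring

/-- Cramer's rule: `P` has barycentric coordinates proportional to `sideOf Y Z P`, `sideOf Z X P`
and `sideOf X Y P` in the triangle `XYZ`. -/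
theorem sideOf_mul_sideOf_add (U V X Y Z P : Pt) :
    sideOf Y Z P * sideOf U V X + sideOf Z X P * sideOf U V Y + sideOf X Y P * sideOf U V Z
      = sideOf X Y Z * sideOf U V P := by
  unfold sideOf; ring

/-- The linear functional whose level lines are parallel to `UV`: up to an additive constant it is
`sideOf U V`. -/
noncomputable def sideFunctional (U V : Pt) : Pt →L[ℝ] ℝ :=
  (V.1 - U.1) • ContinuousLinearMap.snd ℝ ℝ ℝ - (V.2 - U.2) • ContinuousLinearMap.fst ℝ ℝ ℝ

theorem sideOf_eq_sideFunctional_sub (U V X : Pt) :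
    sideOf U V X = sideFunctional U V X - sideFunctional U V U := by
  simp only [sideOf, sideFunctional, sub_apply, smul_apply, ContinuousLinearMap.coe_fst',
    ContinuousLinearMap.coe_snd', smul_eq_mul]
  ring

theorem sideFunctional_ne_zero {U V : Pt} (hUV : U ≠ V) : sideFunctional U V ≠ 0 := by
  contrapose! hUV
  have hfst : V.1 - U.1 = 0 := by simpa [sideFunctional] using congr($hUV (0, 1))
  have hsnd : U.2 - V.2 = 0 := by simpa [sideFunctional] using congr($hUV (1, 0))
  ext <;> linarith

theorem convex_setOf_sideOf_nonneg (U V : Pt) : Convex ℝ {X | 0 ≤ sideOf U V X} := by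
  simpa only [sideOf_eq_sideFunctional_sub, sub_nonneg] using
    convex_halfSpace_ge (sideFunctional U V).isBoundedLinearMap.toIsLinearMap _

theorem convex_setOf_sideOf_neg (U V : Pt) : Convex ℝ {X | sideOf U V X < 0} := by
  simpa only [sideOf_eq_sideFunctional_sub, sub_neg] using
    convex_halfSpace_lt (sideFunctional U V).isBoundedLinearMap.toIsLinearMap _

theorem isOpen_setOf_sideOf_pos (U V : Pt) : IsOpen {X | 0 < sideOf U V X} :=
  isOpen_lt continuous_const (by unfold sideOf; fun_prop)

theorem disjoint_convexHull_of_sideOf {s t : Set Pt} (U V : Pt) (hs : ∀ X ∈ s, sideOf U V X < 0)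
    (ht : ∀ X ∈ t, 0 ≤ sideOf U V X) : Disjoint (convexHull ℝ s) (convexHull ℝ t) := by
  refine Set.disjoint_left.2 fun X hXs hXt => ?_
  have hneg : sideOf U V X < 0 := convexHull_min hs (convex_setOf_sideOf_neg U V) hXs
  have hnonneg : 0 ≤ sideOf U V X := convexHull_min ht (convex_setOf_sideOf_nonneg U V) hXt
  exact hneg.not_ge hnonneg

theorem notMem_interior_convexHull_of_forall_le {E : Type*} [AddCommGroup E] [Module ℝ E]
    [TopologicalSpace E] [ContinuousAdd E] [ContinuousSMul ℝ E] {s : Set E} {a : E} {ℓ : E →L[ℝ] ℝ}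
    (hℓ : ℓ ≠ 0) (ha : ∀ x ∈ s, ℓ a ≤ ℓ x) : a ∉ interior (convexHull ℝ s) := by
  intro hint
  have hopen : IsOpen (ℓ '' interior (convexHull ℝ s)) :=
    ℓ.isOpenMap_of_ne_zero hℓ _ isOpen_interior
  have hsub : ℓ '' interior (convexHull ℝ s) ⊆ Set.Ici (ℓ a) := by
    rw [Set.image_subset_iff]
    exact interior_subset.trans
      (convexHull_min ha (convex_halfSpace_ge ℓ.toLinearMap.isLinear (ℓ a)))
  have hmem : ℓ a ∈ interior (Set.Ici (ℓ a)) := interior_maximal hsub hopen ⟨a, hint, rfl⟩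
  simp at hmem

theorem notMem_interior_convexHull_of_sideOf_nonneg {s : Set Pt} {U V P : Pt} (hUV : U ≠ V)
    (hs : ∀ X ∈ s, 0 ≤ sideOf U V X) (hP : sideOf U V P = 0) :
    P ∉ interior (convexHull ℝ s) := by
  refine notMem_interior_convexHull_of_forall_le (sideFunctional_ne_zero hUV) fun X hX => ?_
  linarith [hs X hX, sideOf_eq_sideFunctional_sub U V X, sideOf_eq_sideFunctional_sub U V P]

theorem collinear_of_sideOf_eq_zero {p q r : Pt} (hpq : p ≠ q) (h : sideOf p q r = 0) :
    Collinear ℝ ({p, q, r} : Set Pt) := by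
  have hnorm : (q.1 - p.1) ^ 2 + (q.2 - p.2) ^ 2 ≠ 0 := by
    contrapose! hpq
    ext <;> nlinarith [sq_nonneg (q.1 - p.1), sq_nonneg (q.2 - p.2)]
  have hr : r = AffineMap.lineMap p q
      (((r.1 - p.1) * (q.1 - p.1) + (r.2 - p.2) * (q.2 - p.2)) /
        ((q.1 - p.1) ^ 2 + (q.2 - p.2) ^ 2)) := by
    unfold sideOf at h
    ext <;> simp [AffineMap.lineMap_apply] <;> field_simp
    · linear_combination (p.2 - q.2) * h
    · linear_combination (q.1 - p.1) * h
  have hline : r ∈ line[ℝ, p, q] := hr ▸ AffineMap.lineMap_mem_affineSpan_pair _ p q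
  exact collinear_triple_of_mem_affineSpan_pair (left_mem_affineSpan_pair ℝ p q)
    (right_mem_affineSpan_pair ℝ p q) hline

end Orientation

namespace GeneralPosition

variable {S T : Finset Pt} {p q r : Pt}

theorem mono (hS : GeneralPosition S) (hT : T ⊆ S) : GeneralPosition T :=
  fun p hp q hq r hr => hS p (hT hp) q (hT hq) r (hT hr)

theorem sideOf_ne_zero (hS : GeneralPosition S) (hp : p ∈ S) (hq : q ∈ S) (hr : r ∈ S)
    (hpq : p ≠ q) (hpr : p ≠ r) (hqr : q ≠ r) : sideOf p q r ≠ 0 :=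
  fun h => hS p hp q hq r hr hpq hpr hqr (collinear_of_sideOf_eq_zero hpq h)

end GeneralPosition

section Hull

variable {S : Finset Pt} {A B P Q X Y Z : Pt}

/-- `Q` lies strictly inside a counterclockwise triangle with vertices in `S`; in general position
this singles out the points of `S` in the interior of its convex hull. -/
def InOpenTriangle (S : Finset Pt) (Q : Pt) : Prop :=
  ∃ X ∈ S, ∃ Y ∈ S, ∃ Z ∈ S, 0 < sideOf X Y Q ∧ 0 < sideOf Y Z Q ∧ 0 < sideOf Z X Q

/-- A point of `S` strictly inside a triangle spanned by `S`. -/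
structure IsInnerPoint (S : Finset Pt) (Q : Pt) : Prop where
  mem : Q ∈ S
  inOpenTriangle : InOpenTriangle S Q

/-- A vertex of the convex hull of `S`, encoded as a point of `S` that lies in no open triangle
spanned by `S`. -/
structure IsHullVertex (S : Finset Pt) (A : Pt) : Prop where
  mem : A ∈ S
  not_inOpenTriangle : ¬ InOpenTriangle S A

/-- A counterclockwise directed edge of the convex hull of `S`: all other points of `S` lie strictly
to the left of `AB`. -/
structure IsHullEdge (S : Finset Pt) (A B : Pt) : Prop where
  left_mem : A ∈ S
  right_mem : B ∈ S
  ne : A ≠ B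
  sideOf_pos : ∀ X ∈ S, X ≠ A → X ≠ B → 0 < sideOf A B X

theorem isHullVertex_or_isInnerPoint (hP : P ∈ S) : IsHullVertex S P ∨ IsInnerPoint S P := by
  by_cases h : InOpenTriangle S P
  · exact Or.inr ⟨hP, h⟩
  · exact Or.inl ⟨hP, h⟩

theorem IsHullVertex.ne (hA : IsHullVertex S A) (hQ : IsInnerPoint S Q) : A ≠ Q := by
  rintro rfl
  exact hA.not_inOpenTriangle hQ.inOpenTriangle

theorem mem_convexHull_triangle (hXY : 0 < sideOf X Y P) (hYZ : 0 < sideOf Y Z P)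
    (hZX : 0 < sideOf Z X P) : P ∈ convexHull ℝ {X, Y, Z} := by
  have hsum := sideOf_add_sideOf_add_sideOf X Y Z P
  have hpos : 0 < sideOf X Y Z := by linarith
  refine mem_convexHull_of_exists_fintype
    ![sideOf Y Z P / sideOf X Y Z, sideOf Z X P / sideOf X Y Z, sideOf X Y P / sideOf X Y Z]
    ![X, Y, Z] ?_ ?_ ?_ ?_
  · simpa [Fin.forall_fin_succ] using
      ⟨(div_pos hYZ hpos).le, (div_pos hZX hpos).le, (div_pos hXY hpos).le⟩
  · rw [Fin.sum_univ_three]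
    simp only [Matrix.cons_val]
    rw [← add_div, ← add_div, hsum, div_self hpos.ne']
  · simp [Fin.forall_fin_succ]
  · rw [Fin.sum_univ_three]
    ext <;> simp <;> field_simp <;> unfold sideOf <;> ring

theorem InOpenTriangle.mem_interior_convexHull (h : InOpenTriangle S Q) :
    Q ∈ interior (convexHull ℝ (S : Set Pt)) := by
  obtain ⟨X, hX, Y, hY, Z, hZ, hXY, hYZ, hZX⟩ := h
  have hsub : ({X, Y, Z} : Set Pt) ⊆ S := by
    simp [Set.insert_subset_iff, hX, hY, hZ]
  refine mem_interior.2
    ⟨{P | 0 < sideOf X Y P} ∩ ({P | 0 < sideOf Y Z P} ∩ {P | 0 < sideOf Z X P}), ?_, ?_,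
      hXY, hYZ, hZX⟩
  · rintro P ⟨hP₁, hP₂, hP₃⟩
    exact convexHull_mono hsub (mem_convexHull_triangle hP₁ hP₂ hP₃)
  · exact (isOpen_setOf_sideOf_pos X Y).inter
      ((isOpen_setOf_sideOf_pos Y Z).inter (isOpen_setOf_sideOf_pos Z X))

theorem isHullVertex_of_notMem_interior (hP : P ∈ S)
    (h : P ∉ interior (convexHull ℝ (S : Set Pt))) : IsHullVertex S P :=
  ⟨hP, fun htri => h htri.mem_interior_convexHull⟩

theorem exists_isHullVertex (hS : S.Nonempty) : ∃ A, IsHullVertex S A := by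
  obtain ⟨A, hA, hmin⟩ := S.exists_min_image Prod.fst hS
  have hfst : ContinuousLinearMap.fst ℝ ℝ ℝ ≠ 0 := fun h => by simpa using congr($h (1, 0))
  exact ⟨A, isHullVertex_of_notMem_interior hA
    (notMem_interior_convexHull_of_forall_le hfst hmin)⟩

namespace IsHullEdge

theorem sideOf_nonneg (h : IsHullEdge S A B) (hX : X ∈ S) : 0 ≤ sideOf A B X := by
  by_cases hXA : X = A
  · simp [hXA]
  by_cases hXB : X = B
  · simp [hXB]
  exact (h.sideOf_pos X hX hXA hXB).le

theorem notMem_interior_convexHull (h : IsHullEdge S A B) (hP : sideOf A B P = 0) :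
    P ∉ interior (convexHull ℝ (S : Set Pt)) :=
  notMem_interior_convexHull_of_sideOf_nonneg h.ne (fun _ hX => h.sideOf_nonneg hX) hP

theorem isHullVertex_left (h : IsHullEdge S A B) : IsHullVertex S A :=
  isHullVertex_of_notMem_interior h.left_mem (h.notMem_interior_convexHull (by simp))

theorem isHullVertex_right (h : IsHullEdge S A B) : IsHullVertex S B :=
  isHullVertex_of_notMem_interior h.right_mem (h.notMem_interior_convexHull (by simp))

theorem notMem_convexHull_erase (h : IsHullEdge S A B) :
    A ∉ convexHull ℝ (S.erase A : Set Pt) := by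
  have hconv : Convex ℝ {X | 0 < sideOf A B X ∨ X = B} := by
    refine convex_iff_pairwise_pos.2 fun x hx y hy hxy a b ha hb hab => Or.inl ?_
    rw [sideOf_smul_add_smul A B x y hab]
    rcases hx with hx | rfl <;> rcases hy with hy | rfl
    · positivity
    · simp only [sideOf_self_right, mul_zero, add_zero]; positivity
    · simp only [sideOf_self_right, mul_zero, zero_add]; positivity
    · exact absurd rfl hxy
  have hsub : (S.erase A : Set Pt) ⊆ {X | 0 < sideOf A B X ∨ X = B} := fun X hX => by
    obtain ⟨hXA, hXS⟩ := Finset.mem_erase.1 hX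
    exact or_iff_not_imp_right.2 (h.sideOf_pos X hXS hXA)
  intro hA
  rcases convexHull_min hsub hconv hA with hpos | heq
  · simp at hpos
  · exact h.ne heq

end IsHullEdge

-- The angular order around a hull vertex is transitive: a failure would put it inside a triangle.
theorem IsHullVertex.sideOf_pos_trans (hA : IsHullVertex S A) (hS : GeneralPosition S)
    (hX : X ∈ S) (hY : Y ∈ S) (hZ : Z ∈ S) (hXY : 0 < sideOf A X Y) (hYZ : 0 < sideOf A Y Z) :
    0 < sideOf A X Z := by
  have hAX : A ≠ X := by rintro rfl; simp at hXY
  have hAZ : A ≠ Z := by rintro rfl; simp at hYZ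
  have hXZ : X ≠ Z := by rintro rfl; linarith [sideOf_swap_right A X Y]
  by_contra hnot
  have hneg : sideOf A X Z < 0 :=
    lt_of_le_of_ne (not_lt.1 hnot) (hS.sideOf_ne_zero hA.mem hX hZ hAX hAZ hXZ)
  refine hA.not_inOpenTriangle ⟨X, hX, Y, hY, Z, hZ, ?_, ?_, ?_⟩
  · linarith [sideOf_rotate A X Y]
  · linarith [sideOf_rotate A Y Z]
  · linarith [sideOf_rotate A Z X, sideOf_swap_right A X Z]

end Hull

section Sides

variable {S : Finset Pt} {A B X Y : Pt}

/-- The points of `S` strictly to the right of the directed line `AB`. When `A` is a vertex of the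
hull of `S`, the number `#(rightOf S A B)` is the rank of `B` in the counterclockwise order in which
`A` sees the other points, starting from `0`. -/
noncomputable def rightOf (S : Finset Pt) (A B : Pt) : Finset Pt := {X ∈ S | sideOf A B X < 0}

/-- The points of `S` strictly to the left of the directed line `AB`. -/
noncomputable def leftOf (S : Finset Pt) (A B : Pt) : Finset Pt := {X ∈ S | 0 < sideOf A B X}

theorem mem_rightOf : X ∈ rightOf S A B ↔ X ∈ S ∧ sideOf A B X < 0 := Finset.mem_filter

theorem mem_leftOf : X ∈ leftOf S A B ↔ X ∈ S ∧ 0 < sideOf A B X := Finset.mem_filter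

theorem rightOf_subset : rightOf S A B ⊆ S := Finset.filter_subset _ S

theorem leftOf_subset : leftOf S A B ⊆ S := Finset.filter_subset _ S

theorem rightOf_swap (S : Finset Pt) (A B : Pt) : rightOf S B A = leftOf S A B := by
  ext X
  rw [mem_rightOf, mem_leftOf, sideOf_swap_left, neg_neg_iff_pos]

theorem leftOf_swap (S : Finset Pt) (A B : Pt) : leftOf S B A = rightOf S A B :=
  (rightOf_swap S B A).symm

theorem disjoint_rightOf_leftOf : Disjoint (rightOf S A B) (leftOf S A B) :=
  Finset.disjoint_filter.2 fun _ _ hneg hpos => hneg.not_gt hpos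

theorem notMem_rightOf_right : B ∉ rightOf S A B := by simp [mem_rightOf]

theorem GeneralPosition.mem_rightOf_or_mem_leftOf (hS : GeneralPosition S) (hA : A ∈ S)
    (hB : B ∈ S) (hAB : A ≠ B) (hX : X ∈ S) (hXA : X ≠ A) (hXB : X ≠ B) :
    X ∈ rightOf S A B ∨ X ∈ leftOf S A B := by
  rw [mem_rightOf, mem_leftOf]
  exact (hS.sideOf_ne_zero hA hB hX hAB hXA.symm hXB.symm).lt_or_gt.imp (⟨hX, ·⟩) (⟨hX, ·⟩)

theorem GeneralPosition.eq_pair_union_rightOf_union_leftOf (hS : GeneralPosition S) (hA : A ∈ S)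
    (hB : B ∈ S) (hAB : A ≠ B) : S = {A, B} ∪ (rightOf S A B ∪ leftOf S A B) := by
  ext X
  simp only [Finset.mem_union, Finset.mem_insert, Finset.mem_singleton]
  constructor
  · intro hX
    have := hS.mem_rightOf_or_mem_leftOf hA hB hAB hX
    tauto
  · rintro ((rfl | rfl) | hX | hX)
    exacts [hA, hB, rightOf_subset hX, leftOf_subset hX]

theorem GeneralPosition.card_rightOf_add_card_leftOf_add_two (hS : GeneralPosition S) (hA : A ∈ S)
    (hB : B ∈ S) (hAB : A ≠ B) : #(rightOf S A B) + #(leftOf S A B) + 2 = #S := by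
  have hdisj : Disjoint {A, B} (rightOf S A B ∪ leftOf S A B) := by
    simp [Finset.disjoint_insert_left, mem_rightOf, mem_leftOf]
  conv_rhs => rw [hS.eq_pair_union_rightOf_union_leftOf hA hB hAB]
  rw [Finset.card_union_of_disjoint hdisj, Finset.card_union_of_disjoint disjoint_rightOf_leftOf,
    Finset.card_pair hAB]
  ring

namespace IsHullVertex

theorem card_rightOf_lt (hA : IsHullVertex S A) (hS : GeneralPosition S) (hX : X ∈ S) (hY : Y ∈ S)
    (hXY : 0 < sideOf A X Y) : #(rightOf S A X) < #(rightOf S A Y) := by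
  have hYX : sideOf A Y X < 0 := by linarith [sideOf_swap_right A X Y]
  have hsub : rightOf S A X ⊆ rightOf S A Y := by
    intro Z hZ
    obtain ⟨hZS, hZneg⟩ := mem_rightOf.1 hZ
    have hZY : 0 < sideOf A Z Y :=
      hA.sideOf_pos_trans hS hZS hX hY (by linarith [sideOf_swap_right A X Z]) hXY
    exact mem_rightOf.2 ⟨hZS, by linarith [sideOf_swap_right A Z Y]⟩
  exact Finset.card_lt_card ((Finset.ssubset_iff_of_subset hsub).2
    ⟨X, mem_rightOf.2 ⟨hX, hYX⟩, notMem_rightOf_right⟩)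

theorem card_rightOf_lt_iff (hA : IsHullVertex S A) (hS : GeneralPosition S) (hX : X ∈ S)
    (hY : Y ∈ S) (hAX : A ≠ X) (hAY : A ≠ Y) :
    #(rightOf S A X) < #(rightOf S A Y) ↔ 0 < sideOf A X Y := by
  refine ⟨fun hlt => ?_, hA.card_rightOf_lt hS hX hY⟩
  have hXY : X ≠ Y := by rintro rfl; exact hlt.false
  by_contra hnot
  have hneg : sideOf A X Y < 0 :=
    lt_of_le_of_ne (not_lt.1 hnot) (hS.sideOf_ne_zero hA.mem hX hY hAX hAY hXY)
  have hYX : 0 < sideOf A Y X := by linarith [sideOf_swap_right A X Y]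
  exact hlt.asymm (hA.card_rightOf_lt hS hY hX hYX)

theorem injOn_card_rightOf (hA : IsHullVertex S A) (hS : GeneralPosition S) :
    Set.InjOn (fun X => #(rightOf S A X)) (S.erase A) := by
  intro X hX Y hY hXY
  obtain ⟨hXA, hXS⟩ := Finset.mem_erase.1 hX
  obtain ⟨hYA, hYS⟩ := Finset.mem_erase.1 hY
  by_contra hne
  have hXY' : #(rightOf S A X) = #(rightOf S A Y) := hXY
  rcases hS.mem_rightOf_or_mem_leftOf hA.mem hXS hXA.symm hYS hYA (Ne.symm hne) with h | h
  · have hlt := hA.card_rightOf_lt hS hYS hXS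
      (by linarith [(mem_rightOf.1 h).2, sideOf_swap_right A X Y])
    omega
  · have hlt := hA.card_rightOf_lt hS hXS hYS (mem_leftOf.1 h).2
    omega

theorem exists_card_rightOf_eq (hA : IsHullVertex S A) (hS : GeneralPosition S) {j : ℕ}
    (hj : j + 1 < #S) : ∃ B ∈ S, B ≠ A ∧ #(rightOf S A B) = j := by
  have hmaps : Set.MapsTo (fun X => #(rightOf S A X)) (S.erase A) (Finset.range (#S - 1)) := by
    intro X hX
    obtain ⟨hXA, hXS⟩ := Finset.mem_erase.1 hX
    have := hS.card_rightOf_add_card_leftOf_add_two hA.mem hXS hXA.symm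
    simp only [Finset.coe_range, Set.mem_Iio]
    omega
  have hsurj := Finset.surjOn_of_injOn_of_card_le _ hmaps (hA.injOn_card_rightOf hS)
    (by rw [Finset.card_range, Finset.card_erase_of_mem hA.mem])
  obtain ⟨B, hB, hBj⟩ := hsurj (show j ∈ (Finset.range (#S - 1) : Set ℕ) by simp; omega)
  obtain ⟨hBA, hBS⟩ := Finset.mem_erase.1 hB
  exact ⟨B, hBS, hBA, hBj⟩

end IsHullVertex

theorem isHullEdge_iff_card_rightOf_eq_zero (hS : GeneralPosition S) (hA : A ∈ S) (hB : B ∈ S)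
    (hAB : A ≠ B) : IsHullEdge S A B ↔ #(rightOf S A B) = 0 := by
  rw [Finset.card_eq_zero, Finset.eq_empty_iff_forall_notMem]
  refine ⟨fun h X hX => ?_, fun h => ⟨hA, hB, hAB, fun X hX hXA hXB => ?_⟩⟩
  · obtain ⟨hXS, hneg⟩ := mem_rightOf.1 hX
    exact hneg.not_ge (h.sideOf_nonneg hXS)
  · exact (mem_leftOf.1 ((hS.mem_rightOf_or_mem_leftOf hA hB hAB hX hXA hXB).resolve_left (h X))).2

theorem IsHullVertex.exists_isHullEdge (hA : IsHullVertex S A) (hS : GeneralPosition S)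
    (hcard : 1 < #S) : ∃ B, IsHullEdge S A B := by
  obtain ⟨B, hB, hBA, hrank⟩ := hA.exists_card_rightOf_eq hS (j := 0) (by omega)
  exact ⟨B, (isHullEdge_iff_card_rightOf_eq_zero hS hA.mem hB hBA.symm).2 hrank⟩

end Sides

section ExitEdge

variable {S : Finset Pt} {A C D Q X : Pt}

/-- The hull edge `CD` through which the ray from `A` through `Q` leaves the convex hull of `S`. -/
structure IsExitEdge (S : Finset Pt) (A Q C D : Pt) : Prop where
  isHullEdge : IsHullEdge S C D
  sideOf_left : sideOf A Q C < 0
  sideOf_right : 0 < sideOf A Q D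

/-- The parameter `t` for which the line `CD` meets the line `AQ` in `Q + t (Q - A)`. -/
noncomputable def exitParam (A Q C D : Pt) : ℝ := sideOf C D Q / (sideOf A Q D - sideOf A Q C)

theorem exitParam_lt_of_replace_left (hC : sideOf A Q C < 0) (hD : 0 < sideOf A Q D)
    (hX : sideOf A Q X < 0) (hCDX : sideOf C D X < 0) :
    exitParam A Q C D < exitParam A Q X D := by
  have hid : sideOf X D Q * (sideOf A Q D - sideOf A Q C)
      = sideOf C D Q * (sideOf A Q D - sideOf A Q X) - sideOf C D X * sideOf A Q D := by
    unfold sideOf; ring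
  unfold exitParam
  rw [div_lt_div_iff₀ (by linarith) (by linarith)]
  linarith [mul_neg_of_neg_of_pos hCDX hD]

theorem exitParam_lt_of_replace_right (hC : sideOf A Q C < 0) (hD : 0 < sideOf A Q D)
    (hX : 0 < sideOf A Q X) (hCDX : sideOf C D X < 0) :
    exitParam A Q C D < exitParam A Q C X := by
  have hid : sideOf C X Q * (sideOf A Q D - sideOf A Q C)
      = sideOf C D Q * (sideOf A Q X - sideOf A Q C) + sideOf C D X * sideOf A Q C := by
    unfold sideOf; ring
  unfold exitParam
  rw [div_lt_div_iff₀ (by linarith) (by linarith)]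
  linarith [mul_pos_of_neg_of_neg hCDX hC]

theorem exitParam_pos (hC : sideOf A Q C < 0) (hD : 0 < sideOf A Q D) :
    0 < exitParam A Q C D ↔ 0 < sideOf C D Q := by
  have hden : 0 < sideOf A Q D - sideOf A Q C := by linarith
  exact div_pos_iff_of_pos_right hden

theorem cyclic_sign_change {a b c x y z : ℝ} (ha : 0 < a) (hb : 0 < b) (hc : 0 < c)
    (hsum : a * x + b * y + c * z = 0) (hx : x ≠ 0) (hy : y ≠ 0) (hz : z ≠ 0) :
    (x < 0 ∧ 0 < y) ∨ (y < 0 ∧ 0 < z) ∨ (z < 0 ∧ 0 < x) := by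
  have hpos : ¬ (0 < x ∧ 0 < y ∧ 0 < z) := by
    rintro ⟨hx, hy, hz⟩
    have : 0 < a * x + b * y + c * z := by positivity
    exact this.ne' hsum
  have hneg : ¬ (x < 0 ∧ y < 0 ∧ z < 0) := by
    rintro ⟨hx, hy, hz⟩
    linarith [mul_neg_of_pos_of_neg ha hx, mul_neg_of_pos_of_neg hb hy,
      mul_neg_of_pos_of_neg hc hz]
  grind

theorem InOpenTriangle.exists_sideOf_pos (hQ : InOpenTriangle S Q) (hS : GeneralPosition S)
    (hQS : Q ∈ S) (hA : A ∈ S) (hAQ : A ≠ Q) :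
    ∃ C ∈ rightOf S A Q, ∃ D ∈ leftOf S A Q, 0 < sideOf C D Q := by
  obtain ⟨X, hX, Y, hY, Z, hZ, hXY, hYZ, hZX⟩ := hQ
  have of_triangle {U V : Pt} (hU : U ∈ S) (hV : V ∈ S) (hAU : 0 < sideOf A U Q)
      (hUV : 0 < sideOf U V Q) (hVA : 0 < sideOf V A Q) :
      ∃ C ∈ rightOf S A Q, ∃ D ∈ leftOf S A Q, 0 < sideOf C D Q :=
    ⟨U, mem_rightOf.2 ⟨hU, by linarith [sideOf_swap_right A U Q]⟩,
      V, mem_leftOf.2 ⟨hV, by linarith [sideOf_rotate V A Q]⟩, hUV⟩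
  by_cases hXA : X = A
  · subst hXA; exact of_triangle hY hZ hXY hYZ hZX
  by_cases hYA : Y = A
  · subst hYA; exact of_triangle hZ hX hYZ hZX hXY
  by_cases hZA : Z = A
  · subst hZA; exact of_triangle hX hY hZX hXY hYZ
  have hside {W : Pt} (hW : W ∈ S) (hWA : W ≠ A) (hWQ : W ≠ Q) : sideOf A Q W ≠ 0 :=
    hS.sideOf_ne_zero hA hQS hW hAQ hWA.symm hWQ.symm
  have hXQ : X ≠ Q := by rintro rfl; simp at hXY
  have hYQ : Y ≠ Q := by rintro rfl; simp at hXY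
  have hZQ : Z ≠ Q := by rintro rfl; simp at hYZ
  have hcramer := sideOf_mul_sideOf_add A Q X Y Z Q
  rw [sideOf_self_right, mul_zero] at hcramer
  rcases cyclic_sign_change hYZ hZX hXY hcramer (hside hX hXA hXQ) (hside hY hYA hYQ)
    (hside hZ hZA hZQ) with ⟨hC, hD⟩ | ⟨hC, hD⟩ | ⟨hC, hD⟩
  · exact ⟨X, mem_rightOf.2 ⟨hX, hC⟩, Y, mem_leftOf.2 ⟨hY, hD⟩, hXY⟩
  · exact ⟨Y, mem_rightOf.2 ⟨hY, hC⟩, Z, mem_leftOf.2 ⟨hZ, hD⟩, hYZ⟩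
  · exact ⟨Z, mem_rightOf.2 ⟨hZ, hC⟩, X, mem_leftOf.2 ⟨hX, hD⟩, hZX⟩

-- Among the pairs on opposite sides of `AQ`, the one met last by the ray is a hull edge.
theorem IsInnerPoint.exists_isExitEdge (hQ : IsInnerPoint S Q) (hS : GeneralPosition S)
    (hA : A ∈ S) (hAQ : A ≠ Q) : ∃ C D, IsExitEdge S A Q C D := by
  obtain ⟨C₀, hC₀, D₀, hD₀, hpos₀⟩ := hQ.inOpenTriangle.exists_sideOf_pos hS hQ.mem hA hAQ
  obtain ⟨⟨C, D⟩, hCD, hmax⟩ := (rightOf S A Q ×ˢ leftOf S A Q).exists_max_image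
    (fun p => exitParam A Q p.1 p.2) ⟨(C₀, D₀), Finset.mk_mem_product hC₀ hD₀⟩
  obtain ⟨hC, hD⟩ := Finset.mem_product.1 hCD
  obtain ⟨hCS, hCneg⟩ := mem_rightOf.1 hC
  obtain ⟨hDS, hDpos⟩ := mem_leftOf.1 hD
  have hQpos : 0 < sideOf C D Q := by
    rw [← exitParam_pos hCneg hDpos]
    exact ((exitParam_pos (mem_rightOf.1 hC₀).2 (mem_leftOf.1 hD₀).2).2 hpos₀).trans_le
      (hmax _ (Finset.mk_mem_product hC₀ hD₀))
  have hApos : 0 < sideOf C D A := by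
    have : sideOf C D A = sideOf C D Q + (sideOf A Q D - sideOf A Q C) := by unfold sideOf; ring
    linarith
  have hne : C ≠ D := by rintro rfl; linarith
  refine ⟨C, D, ⟨hCS, hDS, hne, fun X hX hXC hXD => ?_⟩, hCneg, hDpos⟩
  by_contra hnot
  have hneg : sideOf C D X < 0 :=
    lt_of_le_of_ne (not_lt.1 hnot) (hS.sideOf_ne_zero hCS hDS hX hne hXC.symm hXD.symm)
  have hXA : X ≠ A := by rintro rfl; exact hnot hApos
  have hXQ : X ≠ Q := by rintro rfl; exact hnot hQpos
  rcases hS.mem_rightOf_or_mem_leftOf hA hQ.mem hAQ hX hXA hXQ with hXr | hXl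
  · exact (exitParam_lt_of_replace_left hCneg hDpos (mem_rightOf.1 hXr).2 hneg).not_ge
      (hmax _ (Finset.mk_mem_product hXr hD))
  · exact (exitParam_lt_of_replace_right hCneg hDpos (mem_leftOf.1 hXl).2 hneg).not_ge
      (hmax _ (Finset.mk_mem_product hC hXl))

namespace IsExitEdge

theorem left_mem_rightOf (h : IsExitEdge S A Q C D) : C ∈ rightOf S A Q :=
  mem_rightOf.2 ⟨h.isHullEdge.left_mem, h.sideOf_left⟩

theorem right_mem_leftOf (h : IsExitEdge S A Q C D) : D ∈ leftOf S A Q :=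
  mem_leftOf.2 ⟨h.isHullEdge.right_mem, h.sideOf_right⟩

theorem rightOf_sdiff (h : IsExitEdge S A Q C D) :
    rightOf (S \ {C, D}) A Q = (rightOf S A Q).erase C := by
  ext X
  simp only [mem_rightOf, Finset.mem_sdiff, Finset.mem_insert, Finset.mem_singleton,
    Finset.mem_erase]
  have hXD : sideOf A Q X < 0 → X ≠ D := by
    rintro hX rfl
    exact hX.not_gt h.sideOf_right
  tauto

theorem leftOf_sdiff (h : IsExitEdge S A Q C D) :
    leftOf (S \ {C, D}) A Q = (leftOf S A Q).erase D := by
  ext X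
  simp only [mem_leftOf, Finset.mem_sdiff, Finset.mem_insert, Finset.mem_singleton,
    Finset.mem_erase]
  have hXC : 0 < sideOf A Q X → X ≠ C := by
    rintro hX rfl
    exact hX.not_gt h.sideOf_left
  tauto

theorem card_rightOf_sdiff (h : IsExitEdge S A Q C D) :
    #(rightOf (S \ {C, D}) A Q) + 1 = #(rightOf S A Q) := by
  rw [h.rightOf_sdiff, Finset.card_erase_add_one h.left_mem_rightOf]

theorem card_leftOf_sdiff (h : IsExitEdge S A Q C D) :
    #(leftOf (S \ {C, D}) A Q) + 1 = #(leftOf S A Q) := by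
  rw [h.leftOf_sdiff, Finset.card_erase_add_one h.right_mem_leftOf]

end IsExitEdge

end ExitEdge

section Matchings

variable {S S₁ S₂ : Finset Pt} {M M₁ M₂ : Finset (Sym2 Pt)} {e : Sym2 Pt} {A B C p : Pt}

namespace IsNCMatching

theorem mem_of_mem (hM : IsNCMatching S M) (he : e ∈ M) (hp : p ∈ e) : p ∈ S :=
  hM.2.1 e he p hp

theorem eq_of_mk_mem (hM : IsNCMatching S M) (hB : s(A, B) ∈ M) (hC : s(A, C) ∈ M) : B = C :=
  Sym2.congr_right.1 <| (hM.2.2.1 A (hM.mem_of_mem hB (Sym2.mem_mk_left A B))).unique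
    ⟨hB, Sym2.mem_mk_left A B⟩ ⟨hC, Sym2.mem_mk_left A C⟩

theorem seg_subset_convexHull (hM : IsNCMatching S M) (he : e ∈ M) :
    seg e ⊆ convexHull ℝ (S : Set Pt) := by
  induction e using Sym2.ind with
  | _ a b =>
    exact (convex_convexHull ℝ _).segment_subset
      (subset_convexHull ℝ _ (hM.mem_of_mem he (Sym2.mem_mk_left a b)))
      (subset_convexHull ℝ _ (hM.mem_of_mem he (Sym2.mem_mk_right a b)))

theorem existsUnique_mem_union (h₁ : IsNCMatching S₁ M₁) (h₂ : IsNCMatching S₂ M₂)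
    (hdisj : Disjoint S₁ S₂) (hp : p ∈ S₁) : ∃! e, e ∈ M₁ ∪ M₂ ∧ p ∈ e := by
  obtain ⟨e, ⟨he, hpe⟩, huniq⟩ := h₁.2.2.1 p hp
  refine ⟨e, ⟨Finset.mem_union_left _ he, hpe⟩, fun f ⟨hf, hpf⟩ => ?_⟩
  rcases Finset.mem_union.1 hf with hf | hf
  · exact huniq f ⟨hf, hpf⟩
  · exact absurd (h₂.mem_of_mem hf hpf) (Finset.disjoint_left.1 hdisj hp)

theorem union (h₁ : IsNCMatching S₁ M₁) (h₂ : IsNCMatching S₂ M₂)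
    (hdisj : Disjoint (convexHull ℝ (S₁ : Set Pt)) (convexHull ℝ (S₂ : Set Pt))) :
    IsNCMatching (S₁ ∪ S₂) (M₁ ∪ M₂) := by
  have hS : Disjoint S₁ S₂ := Finset.disjoint_coe.1 <|
    hdisj.mono (subset_convexHull ℝ _) (subset_convexHull ℝ _)
  have hseg : ∀ e ∈ M₁, ∀ f ∈ M₂, Disjoint (seg e) (seg f) := fun e he f hf =>
    hdisj.mono (h₁.seg_subset_convexHull he) (h₂.seg_subset_convexHull hf)
  refine ⟨fun e he => ?_, fun e he p hp => ?_, fun p hp => ?_, fun e he f hf hef => ?_⟩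
  · exact (Finset.mem_union.1 he).elim (h₁.1 e) (h₂.1 e)
  · exact Finset.mem_union.2 <| (Finset.mem_union.1 he).imp (h₁.mem_of_mem · hp)
      (h₂.mem_of_mem · hp)
  · rcases Finset.mem_union.1 hp with hp | hp
    · exact h₁.existsUnique_mem_union h₂ hS hp
    · rw [Finset.union_comm]
      exact h₂.existsUnique_mem_union h₁ hS.symm hp
  · rcases Finset.mem_union.1 he with he | he <;> rcases Finset.mem_union.1 hf with hf | hf
    · exact h₁.2.2.2 e he f hf hef
    · exact hseg e he f hf
    · exact (hseg f hf e he).symm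
    · exact h₂.2.2.2 e he f hf hef

end IsNCMatching

theorem isNCMatching_empty : IsNCMatching ∅ ∅ := by simp [IsNCMatching]

theorem isNCMatching_pair (hAB : A ≠ B) : IsNCMatching {A, B} {s(A, B)} := by
  simp +contextual [IsNCMatching, hAB, ExistsUnique]

theorem IsNCMatching.insert_isHullEdge (hM : IsNCMatching (S \ {A, B}) M)
    (hAB : IsHullEdge S A B) : IsNCMatching S (insert s(A, B) M) := by
  have hpair : ({A, B} : Finset Pt) ⊆ S := by
    simp [Finset.insert_subset_iff, hAB.left_mem, hAB.right_mem]
  have hdisj : Disjoint (convexHull ℝ ((S \ {A, B} : Finset Pt) : Set Pt))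
      (convexHull ℝ (({A, B} : Finset Pt) : Set Pt)) := by
    refine disjoint_convexHull_of_sideOf B A (fun X hX => ?_) (by simp)
    simp only [Finset.coe_sdiff, Set.mem_sdiff, Finset.mem_coe, Finset.mem_insert,
      Finset.mem_singleton, not_or] at hX
    linarith [hAB.sideOf_pos X hX.1 hX.2.1 hX.2.2, sideOf_swap_left A B X]
  simpa only [Finset.sdiff_union_of_subset hpair, Finset.union_comm M, Finset.singleton_union]
    using hM.union (isNCMatching_pair hAB.ne) hdisj

/-- The matching consisting of the pair `AB`, a matching `M₁` of the points to the right of `AB` and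
a matching `M₂` of the points to its left. -/
noncomputable def joinAcross (A B : Pt) (M₁ M₂ : Finset (Sym2 Pt)) : Finset (Sym2 Pt) :=
  insert s(A, B) (M₁ ∪ M₂)

theorem mem_joinAcross : e ∈ joinAcross A B M₁ M₂ ↔ e = s(A, B) ∨ e ∈ M₁ ∨ e ∈ M₂ := by
  simp only [joinAcross, Finset.mem_insert, Finset.mem_union]

theorem mk_mem_joinAcross (A B : Pt) (M₁ M₂ : Finset (Sym2 Pt)) :
    s(A, B) ∈ joinAcross A B M₁ M₂ :=
  mem_joinAcross.2 (Or.inl rfl)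

theorem joinAcross_swap (A B : Pt) (M₁ M₂ : Finset (Sym2 Pt)) :
    joinAcross B A M₂ M₁ = joinAcross A B M₁ M₂ := by
  rw [joinAcross, joinAcross, Sym2.eq_swap, Finset.union_comm]

theorem IsNCMatching.joinAcross (h₁ : IsNCMatching (rightOf S A B) M₁) (hS : GeneralPosition S)
    (hA : A ∈ S) (hB : B ∈ S) (hAB : A ≠ B) (h₂ : IsNCMatching (leftOf S A B) M₂) :
    IsNCMatching S (joinAcross A B M₁ M₂) := by
  have hleft : IsNCMatching ({A, B} ∪ leftOf S A B) ({s(A, B)} ∪ M₂) := by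
    refine (isNCMatching_pair hAB).union h₂ (disjoint_convexHull_of_sideOf B A ?_ (by simp)).symm
    intro X hX
    linarith [(mem_leftOf.1 hX).2, sideOf_swap_left A B X]
  have hall : IsNCMatching (rightOf S A B ∪ ({A, B} ∪ leftOf S A B)) (M₁ ∪ ({s(A, B)} ∪ M₂)) := by
    refine h₁.union hleft (disjoint_convexHull_of_sideOf A B (fun X hX => (mem_rightOf.1 hX).2) ?_)
    intro X hX
    simp only [Finset.coe_union, Finset.coe_pair, Set.mem_union, Set.mem_insert_iff,
      Set.mem_singleton_iff, Finset.mem_coe, mem_leftOf] at hX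
    rcases hX with (rfl | rfl) | hX
    · simp
    · simp
    · exact hX.2.le
  rwa [Finset.union_left_comm, ← hS.eq_pair_union_rightOf_union_leftOf hA hB hAB,
    Finset.union_left_comm, ← Finset.insert_eq] at hall

theorem filter_joinAcross_sideOf_neg (h₁ : IsNCMatching (rightOf S A B) M₁)
    (h₂ : IsNCMatching (leftOf S A B) M₂) :
    {e ∈ joinAcross A B M₁ M₂ | ∀ X ∈ e, sideOf A B X < 0} = M₁ := by
  ext e
  simp only [Finset.mem_filter, mem_joinAcross]
  refine ⟨?_, fun he => ⟨Or.inr (Or.inl he), fun X hX => (mem_rightOf.1 (h₁.mem_of_mem he hX)).2⟩⟩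
  rintro ⟨rfl | he | he, hneg⟩
  · simpa using hneg A (Sym2.mem_mk_left A B)
  · exact he
  · have hpos := (mem_leftOf.1 (h₂.mem_of_mem he e.out_fst_mem)).2
    exact absurd hpos (hneg _ e.out_fst_mem).not_gt

/-- The non-crossing perfect matchings of `S`, as a finset. -/
noncomputable def ncMatchings (S : Finset Pt) : Finset (Finset (Sym2 Pt)) :=
  {M ∈ S.sym2.powerset | IsNCMatching S M}

theorem mem_ncMatchings : M ∈ ncMatchings S ↔ IsNCMatching S M := by
  refine ⟨fun h => (Finset.mem_filter.1 h).2, fun h => Finset.mem_filter.2 ⟨?_, h⟩⟩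
  exact Finset.mem_powerset.2 fun e he => Finset.mem_sym2_iff.2 fun _ => h.mem_of_mem he

theorem card_ncMatchings (S : Finset Pt) : #(ncMatchings S) = pm S := by
  rw [pm, ← Set.ncard_coe_finset]
  congr 1
  ext M
  exact mem_ncMatchings

end Matchings

section LowerBound

variable {S : Finset Pt} {M : Finset (Sym2 Pt)} {A B C : Pt} {k : ℕ}

/-- The line through `A` and its partner separates the two ends of another pair of `M`. -/
def PiercedAt (A : Pt) (M : Finset (Sym2 Pt)) : Prop :=
  ∃ B C D, s(A, B) ∈ M ∧ s(C, D) ∈ M ∧ sideOf A B C < 0 ∧ 0 < sideOf A B D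

/-- The non-crossing perfect matchings of `S` that are not pierced at `A`. -/
noncomputable def unpiercedMatchings (S : Finset Pt) (A : Pt) : Finset (Finset (Sym2 Pt)) :=
  {M ∈ ncMatchings S | ¬ PiercedAt A M}

/-- The matchings of `S` that contain the pair `AB` and match each side of the line `AB` within
itself. -/
noncomputable def splitMatchings (S : Finset Pt) (A B : Pt) : Finset (Finset (Sym2 Pt)) :=
  Finset.image₂ (joinAcross A B) (ncMatchings (rightOf S A B)) (ncMatchings (leftOf S A B))

theorem mem_splitMatchings : M ∈ splitMatchings S A B ↔
    ∃ M₁ M₂, IsNCMatching (rightOf S A B) M₁ ∧ IsNCMatching (leftOf S A B) M₂ ∧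
      joinAcross A B M₁ M₂ = M := by
  simp only [splitMatchings, Finset.mem_image₂, mem_ncMatchings]
  grind

theorem card_splitMatchings (S : Finset Pt) (A B : Pt) :
    #(splitMatchings S A B) = pm (rightOf S A B) * pm (leftOf S A B) := by
  rw [splitMatchings, ← card_ncMatchings, ← card_ncMatchings, Finset.card_image₂_iff]
  rintro ⟨M₁, M₂⟩ hM ⟨N₁, N₂⟩ hN (heq : joinAcross A B M₁ M₂ = joinAcross A B N₁ N₂)
  obtain ⟨hM₁, hM₂⟩ : IsNCMatching _ M₁ ∧ IsNCMatching _ M₂ := hM.imp mem_ncMatchings.1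
    mem_ncMatchings.1
  obtain ⟨hN₁, hN₂⟩ : IsNCMatching _ N₁ ∧ IsNCMatching _ N₂ := hN.imp mem_ncMatchings.1
    mem_ncMatchings.1
  have hright : M₁ = N₁ := by
    rw [← filter_joinAcross_sideOf_neg hM₁ hM₂, heq, filter_joinAcross_sideOf_neg hN₁ hN₂]
  have hleft : M₂ = N₂ := by
    rw [← rightOf_swap] at hM₂ hN₂
    rw [← leftOf_swap] at hM₁ hN₁
    rw [← filter_joinAcross_sideOf_neg hM₂ hM₁, joinAcross_swap, heq, ← joinAcross_swap,
      filter_joinAcross_sideOf_neg hN₂ hN₁]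
  rw [hright, hleft]

theorem splitMatchings_subset (hS : GeneralPosition S) (hA : A ∈ S) (hB : B ∈ S) (hAB : A ≠ B) :
    splitMatchings S A B ⊆ unpiercedMatchings S A := by
  intro M hM
  obtain ⟨M₁, M₂, h₁, h₂, rfl⟩ := mem_splitMatchings.1 hM
  have hjoin := h₁.joinAcross hS hA hB hAB h₂
  refine Finset.mem_filter.2 ⟨mem_ncMatchings.2 hjoin, ?_⟩
  rintro ⟨B', C, D, hAB', hCD, hC, hD⟩
  obtain rfl := hjoin.eq_of_mk_mem (mk_mem_joinAcross A B M₁ M₂) hAB'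
  rcases mem_joinAcross.1 hCD with h | h | h
  · have hmem : C ∈ s(A, B) := h ▸ Sym2.mem_mk_left C D
    rcases Sym2.mem_iff.1 hmem with rfl | rfl <;> simp at hC
  · exact hD.not_gt (mem_rightOf.1 (h₁.mem_of_mem h (Sym2.mem_mk_right C D))).2
  · exact hC.not_gt (mem_leftOf.1 (h₂.mem_of_mem h (Sym2.mem_mk_left C D))).2

theorem disjoint_splitMatchings (hS : GeneralPosition S) (hA : A ∈ S) (hB : B ∈ S) (hAB : A ≠ B)
    (hBC : B ≠ C) : Disjoint (splitMatchings S A B) (splitMatchings S A C) := by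
  refine Finset.disjoint_left.2 fun M hMB hMC => hBC ?_
  obtain ⟨M₁, M₂, h₁, h₂, rfl⟩ := mem_splitMatchings.1 hMB
  obtain ⟨N₁, N₂, -, -, heq⟩ := mem_splitMatchings.1 hMC
  exact (h₁.joinAcross hS hA hB hAB h₂).eq_of_mk_mem (mk_mem_joinAcross A B M₁ M₂)
    (heq ▸ mk_mem_joinAcross A C N₁ N₂)

theorem sum_pm_mul_pm_le_card_unpiercedMatchings (hS : GeneralPosition S) (hA : A ∈ S) :
    ∑ B ∈ S.erase A, pm (rightOf S A B) * pm (leftOf S A B) ≤ #(unpiercedMatchings S A) := by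
  simp only [← card_splitMatchings]
  rw [← Finset.card_biUnion]
  · refine Finset.card_le_card (Finset.biUnion_subset.2 fun B hB => ?_)
    obtain ⟨hBA, hBS⟩ := Finset.mem_erase.1 hB
    exact splitMatchings_subset hS hA hBS hBA.symm
  · intro B hB C _ hBC
    obtain ⟨hBA, hBS⟩ := Finset.mem_erase.1 hB
    exact disjoint_splitMatchings hS hA hBS hBA.symm hBC

theorem IsHullVertex.catalan_succ_le_card_unpiercedMatchings (hA : IsHullVertex S A)
    (hS : GeneralPosition S) (hcard : #S = 2 * (k + 1))
    (hpm : ∀ j ≤ k, ∀ T ⊆ S, #T = 2 * j → catalan j ≤ pm T) :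
    catalan (k + 1) ≤ #(unpiercedMatchings S A) := by
  have hrank (i : Fin (k + 1)) : ∃ B ∈ S, B ≠ A ∧ #(rightOf S A B) = 2 * i :=
    hA.exists_card_rightOf_eq hS (by omega)
  choose B hBS hBA hBr using hrank
  have hBl (i : Fin (k + 1)) : #(leftOf S A (B i)) = 2 * (k - i) := by
    have := hS.card_rightOf_add_card_leftOf_add_two hA.mem (hBS i) (hBA i).symm
    have := hBr i
    omega
  have hBinj : Function.Injective B := fun i j hij => by
    have := hBr i
    rw [hij, hBr j] at this
    omega
  calc catalan (k + 1) = ∑ i : Fin (k + 1), catalan i * catalan (k - i) := catalan_succ k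
    _ ≤ ∑ i : Fin (k + 1), pm (rightOf S A (B i)) * pm (leftOf S A (B i)) :=
      Finset.sum_le_sum fun i _ => Nat.mul_le_mul
        (hpm i (by omega) _ rightOf_subset (hBr i)) (hpm (k - i) (by omega) _ leftOf_subset (hBl i))
    _ = ∑ X ∈ Finset.univ.image B, pm (rightOf S A X) * pm (leftOf S A X) := by
      rw [Finset.sum_image hBinj.injOn]
    _ ≤ ∑ X ∈ S.erase A, pm (rightOf S A X) * pm (leftOf S A X) :=
      Finset.sum_le_sum_of_subset fun X hX => by
        obtain ⟨i, -, rfl⟩ := Finset.mem_image.1 hX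
        exact Finset.mem_erase.2 ⟨hBA i, hBS i⟩
    _ ≤ #(unpiercedMatchings S A) := sum_pm_mul_pm_le_card_unpiercedMatchings hS hA.mem

theorem GeneralPosition.catalan_le_pm (hS : GeneralPosition S) (hcard : #S = 2 * k) :
    catalan k ≤ pm S := by
  induction k using Nat.strong_induction_on generalizing S with
  | _ k ih =>
    rw [← card_ncMatchings]
    rcases k with _ | k
    · obtain rfl : S = ∅ := Finset.card_eq_zero.1 (by simpa using hcard)
      rw [catalan_zero]
      exact Finset.card_pos.2 ⟨∅, mem_ncMatchings.2 isNCMatching_empty⟩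
    · obtain ⟨A, hA⟩ := exists_isHullVertex (S := S) (Finset.card_pos.1 (by omega))
      calc catalan (k + 1) ≤ #(unpiercedMatchings S A) :=
            hA.catalan_succ_le_card_unpiercedMatchings hS hcard
              fun j hj T hT hTcard => ih j (by omega) (hS.mono hT) hTcard
        _ ≤ #(ncMatchings S) := Finset.card_le_card (Finset.filter_subset _ _)

theorem catalan_pos (k : ℕ) : 0 < catalan k :=
  Nat.pos_of_mul_pos_left (succ_mul_catalan_eq_centralBinom k ▸ Nat.centralBinom_pos k)

theorem GeneralPosition.exists_isNCMatching (hS : GeneralPosition S) (heven : Even #S) :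
    ∃ M, IsNCMatching S M := by
  obtain ⟨k, hk⟩ := even_iff_exists_two_mul.1 heven
  obtain ⟨M, hM⟩ : (ncMatchings S).Nonempty := by
    rw [← Finset.card_pos, card_ncMatchings]
    exact (catalan_pos k).trans_le (hS.catalan_le_pm hk)
  exact ⟨M, mem_ncMatchings.1 hM⟩

end LowerBound

section PiercingFree

variable {S : Finset Pt} {M : Finset (Sym2 Pt)} {A B C D P Q X : Pt} {k : ℕ}

/-- An even set in general position all of whose non-crossing perfect matchings are unpierced at
every hull vertex; this is all that is used about sets attaining the Catalan bound. -/
structure PiercingFree (S : Finset Pt) : Prop where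
  generalPosition : GeneralPosition S
  even_card : Even #S
  not_piercedAt : ∀ A M, IsHullVertex S A → IsNCMatching S M → ¬ PiercedAt A M

theorem piercingFree_of_pm_eq_catalan (hS : GeneralPosition S) (hcard : #S = 2 * k)
    (hpm : pm S = catalan k) : PiercingFree S := by
  refine ⟨hS, hcard ▸ even_two_mul k, fun A M hA hM hpierced => ?_⟩
  obtain _ | k := k
  · have := Finset.card_pos.2 ⟨A, hA.mem⟩
    omega
  have hlower : catalan (k + 1) ≤ #(unpiercedMatchings S A) :=
    hA.catalan_succ_le_card_unpiercedMatchings hS hcard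
      fun _ _ _ hT hTcard => (hS.mono hT).catalan_le_pm hTcard
  have hlt : #(unpiercedMatchings S A) < #(ncMatchings S) :=
    Finset.card_lt_card <| Finset.filter_ssubset.2
      ⟨M, mem_ncMatchings.2 hM, not_not_intro hpierced⟩
  rw [card_ncMatchings, hpm] at hlt
  omega

theorem GeneralPosition.exists_isNCMatching_mk_mem (hS : GeneralPosition S) (hA : A ∈ S)
    (hB : B ∈ S) (hAB : A ≠ B) (hright : Even #(rightOf S A B)) (hleft : Even #(leftOf S A B)) :
    ∃ M, IsNCMatching S M ∧ s(A, B) ∈ M := by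
  obtain ⟨M₁, h₁⟩ := (hS.mono rightOf_subset).exists_isNCMatching hright
  obtain ⟨M₂, h₂⟩ := (hS.mono leftOf_subset).exists_isNCMatching hleft
  exact ⟨joinAcross A B M₁ M₂, h₁.joinAcross hS hA hB hAB h₂, mk_mem_joinAcross A B M₁ M₂⟩

namespace IsExitEdge

theorem piercedAt_insert (h : IsExitEdge S A Q C D) (hM : s(A, Q) ∈ M) :
    PiercedAt A (insert s(C, D) M) :=
  ⟨Q, C, D, Finset.mem_insert_of_mem hM, Finset.mem_insert_self _ _, h.sideOf_left, h.sideOf_right⟩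

theorem mem_sdiff (h : IsExitEdge S A Q C D) (hX : X ∈ S) (hline : sideOf A Q X = 0) :
    X ∈ S \ {C, D} := by
  simp only [Finset.mem_sdiff, Finset.mem_insert, Finset.mem_singleton, not_or]
  refine ⟨hX, ?_, ?_⟩
  · rintro rfl; exact h.sideOf_left.ne hline
  · rintro rfl; exact h.sideOf_right.ne' hline

end IsExitEdge

theorem IsHullEdge.card_sdiff_add_two (h : IsHullEdge S A B) : #(S \ {A, B}) + 2 = #S := by
  rw [← Finset.card_pair h.ne]
  exact Finset.card_sdiff_add_card_eq_card
    (by simp [Finset.insert_subset_iff, h.left_mem, h.right_mem])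

-- Removing the exit edge makes both sides of `AQ` even; putting it back pierces the matching.
theorem IsInnerPoint.exists_piercedAt (hQ : IsInnerPoint S Q) (hS : GeneralPosition S)
    (heven : Even #S) (hA : A ∈ S) (hAQ : A ≠ Q) (hodd : Odd #(rightOf S A Q)) :
    ∃ M, IsNCMatching S M ∧ s(A, Q) ∈ M ∧ PiercedAt A M := by
  obtain ⟨C, D, hexit⟩ := hQ.exists_isExitEdge hS hA hAQ
  have hcard := hS.card_rightOf_add_card_leftOf_add_two hA hQ.mem hAQ
  have hright := hexit.card_rightOf_sdiff
  have hleft := hexit.card_leftOf_sdiff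
  obtain ⟨M, hM, hAQM⟩ := (hS.mono Finset.sdiff_subset).exists_isNCMatching_mk_mem
    (hexit.mem_sdiff hA (by simp)) (hexit.mem_sdiff hQ.mem (by simp)) hAQ (by grind) (by grind)
  exact ⟨insert s(C, D) M, hM.insert_isHullEdge hexit.isHullEdge, Finset.mem_insert_of_mem hAQM,
    hexit.piercedAt_insert hAQM⟩

theorem IsHullEdge.right_mem_rightOf (h : IsHullEdge S A B) (hQ : IsInnerPoint S Q) :
    B ∈ rightOf S A Q := mem_rightOf.2 ⟨h.right_mem, by
  linarith [h.sideOf_pos Q hQ.mem (h.isHullVertex_left.ne hQ).symm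
    (h.isHullVertex_right.ne hQ).symm, sideOf_swap_right A B Q]⟩

theorem IsHullEdge.inOpenTriangle (h : IsHullEdge S C D) (hA : A ∈ S) (hX : X ∈ S)
    (hCX : 0 < sideOf A C X) (hXD : 0 < sideOf A X D) : InOpenTriangle S X := by
  refine ⟨A, hA, C, h.left_mem, D, h.right_mem, hCX, h.sideOf_pos X hX ?_ ?_, ?_⟩
  · rintro rfl; simp at hCX
  · rintro rfl; simp at hXD
  · linarith [sideOf_rotate D A X]

theorem IsHullVertex.isHullEdge_of_card_rightOf_eq_one (hA : IsHullVertex S A)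
    (hS : GeneralPosition S) (hAB : IsHullEdge S A B) (hP : IsHullVertex S P) (hAP : A ≠ P)
    (hrank : #(rightOf S A P) = 1) : IsHullEdge S B P := by
  have hBrank := (isHullEdge_iff_card_rightOf_eq_zero hS hA.mem hAB.right_mem hAB.ne).1 hAB
  have hBP : B ≠ P := by rintro rfl; omega
  have hABP : 0 < sideOf A B P := hAB.sideOf_pos P hP.mem hAP.symm hBP.symm
  refine ⟨hAB.right_mem, hP.mem, hBP, fun X hX hXB hXP => ?_⟩
  by_cases hXA : X = A
  · rw [hXA, sideOf_rotate]
    exact hABP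
  have hAPX : 0 < sideOf A P X := by
    have hPmem := Finset.mem_erase.2 ⟨hAP.symm, hP.mem⟩
    have hBmem := Finset.mem_erase.2 ⟨hAB.ne.symm, hAB.right_mem⟩
    have hXmem := Finset.mem_erase.2 ⟨hXA, hX⟩
    have hinj := hA.injOn_card_rightOf hS
    have hXone : #(rightOf S A X) ≠ 1 := fun h => hXP (hinj hXmem hPmem (h.trans hrank.symm))
    have hXzero : #(rightOf S A X) ≠ 0 := fun h => hXB (hinj hXmem hBmem (h.trans hBrank.symm))
    rw [← hA.card_rightOf_lt_iff hS hP.mem hX hAP (Ne.symm hXA)]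
    omega
  have hPXB : 0 < sideOf P X B := hP.sideOf_pos_trans hS hX hA.mem hAB.right_mem
    (by linarith [sideOf_rotate A P X]) (by linarith [sideOf_rotate P A B])
  linarith [sideOf_rotate B P X]

theorem IsHullVertex.leftOf_subset_rightOf (hD : IsHullVertex S D) (hS : GeneralPosition S)
    (hA : A ∈ S) (hQ : Q ∈ S) (hAQD : 0 < sideOf A Q D) : leftOf S A D ⊆ rightOf S D Q := by
  intro X hX
  obtain ⟨hXS, hADX⟩ := mem_leftOf.1 hX
  have hDXQ : 0 < sideOf D X Q := hD.sideOf_pos_trans hS hXS hA hQ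
    (by linarith [sideOf_rotate A D X]) (by linarith [sideOf_rotate D A Q])
  exact mem_rightOf.2 ⟨hXS, by linarith [sideOf_swap_right D X Q]⟩

namespace PiercingFree

theorem even_card_rightOf (h : PiercingFree S) (hA : IsHullVertex S A) (hQ : IsInnerPoint S Q) :
    Even #(rightOf S A Q) := by
  rw [← Nat.not_odd_iff_even]
  intro hodd
  obtain ⟨M, hM, -, hpierced⟩ :=
    hQ.exists_piercedAt h.generalPosition h.even_card hA.mem (hA.ne hQ) hodd
  exact h.not_piercedAt A M hA hM hpierced

theorem isHullVertex_of_odd_card_rightOf (h : PiercingFree S) (hA : IsHullVertex S A) (hP : P ∈ S)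
    (hodd : Odd #(rightOf S A P)) : IsHullVertex S P :=
  (isHullVertex_or_isInnerPoint hP).resolve_right fun hinner =>
    Nat.not_even_iff_odd.2 hodd (h.even_card_rightOf hA hinner)

theorem two_le_card_rightOf (h : PiercingFree S) (hA : IsHullVertex S A) (hQ : IsInnerPoint S Q) :
    2 ≤ #(rightOf S A Q) := by
  obtain ⟨C, D, hexit⟩ := hQ.exists_isExitEdge h.generalPosition hA.mem (hA.ne hQ)
  have hpos := Finset.card_pos.2 ⟨C, hexit.left_mem_rightOf⟩
  have heven := h.even_card_rightOf hA hQ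
  grind

theorem two_le_card_leftOf (h : PiercingFree S) (hA : IsHullVertex S A) (hQ : IsInnerPoint S Q) :
    2 ≤ #(leftOf S A Q) := by
  obtain ⟨C, D, hexit⟩ := hQ.exists_isExitEdge h.generalPosition hA.mem (hA.ne hQ)
  have hpos := Finset.card_pos.2 ⟨D, hexit.right_mem_leftOf⟩
  have hcard := h.generalPosition.card_rightOf_add_card_leftOf_add_two hA.mem hQ.mem (hA.ne hQ)
  have hright := h.even_card_rightOf hA hQ
  have hS := h.even_card
  grind

theorem card_rightOf_exit_left (h : PiercingFree S) (hA : IsHullVertex S A)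
    (hQ : IsInnerPoint S Q) (hexit : IsExitEdge S A Q C D) :
    #(rightOf S A C) + 1 = #(rightOf S A Q) := by
  have hS := h.generalPosition
  have hCD := hexit.isHullEdge
  have hAC : A ≠ C := by rintro rfl; simpa using hexit.sideOf_left
  have hCQ : #(rightOf S A C) < #(rightOf S A Q) := hA.card_rightOf_lt hS hCD.left_mem hQ.mem
    (by linarith [hexit.sideOf_left, sideOf_swap_right A Q C])
  by_contra hne
  have hcard := hS.card_rightOf_add_card_leftOf_add_two hA.mem hQ.mem (hA.ne hQ)
  obtain ⟨P, hP, hPA, hrank⟩ :=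
    hA.exists_card_rightOf_eq hS (j := #(rightOf S A Q) - 1) (by omega)
  have hPodd : Odd #(rightOf S A P) := by
    have := h.even_card_rightOf hA hQ
    grind
  have hCP : 0 < sideOf A C P :=
    (hA.card_rightOf_lt_iff hS hCD.left_mem hP hAC hPA.symm).1 (by omega)
  have hPQ : 0 < sideOf A P Q :=
    (hA.card_rightOf_lt_iff hS hP hQ.mem hPA.symm (hA.ne hQ)).1 (by omega)
  have hPD : 0 < sideOf A P D :=
    hA.sideOf_pos_trans hS hP hQ.mem hCD.right_mem hPQ hexit.sideOf_right
  exact (h.isHullVertex_of_odd_card_rightOf hA hP hPodd).not_inOpenTriangle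
    (hCD.inOpenTriangle hA.mem hP hCP hPD)

theorem card_rightOf_exit_right (h : PiercingFree S) (hA : IsHullVertex S A)
    (hQ : IsInnerPoint S Q) (hexit : IsExitEdge S A Q C D) :
    #(rightOf S A D) = #(rightOf S A Q) + 1 := by
  have hS := h.generalPosition
  have hCD := hexit.isHullEdge
  have hAD : A ≠ D := by rintro rfl; simpa using hexit.sideOf_right
  have hQD : #(rightOf S A Q) < #(rightOf S A D) :=
    hA.card_rightOf_lt hS hQ.mem hCD.right_mem hexit.sideOf_right
  by_contra hne
  have hcard := hS.card_rightOf_add_card_leftOf_add_two hA.mem hQ.mem (hA.ne hQ)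
  have hleft := h.two_le_card_leftOf hA hQ
  obtain ⟨P, hP, hPA, hrank⟩ :=
    hA.exists_card_rightOf_eq hS (j := #(rightOf S A Q) + 1) (by omega)
  have hPodd : Odd #(rightOf S A P) := hrank ▸ (h.even_card_rightOf hA hQ).add_one
  have hPD : 0 < sideOf A P D :=
    (hA.card_rightOf_lt_iff hS hP hCD.right_mem hPA.symm hAD).1 (by omega)
  have hQP : 0 < sideOf A Q P :=
    (hA.card_rightOf_lt_iff hS hQ.mem hP (hA.ne hQ) hPA.symm).1 (by omega)
  have hCP : 0 < sideOf A C P := hA.sideOf_pos_trans hS hCD.left_mem hQ.mem hP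
    (by linarith [hexit.sideOf_left, sideOf_swap_right A Q C]) hQP
  exact (h.isHullVertex_of_odd_card_rightOf hA hP hPodd).not_inOpenTriangle
    (hCD.inOpenTriangle hA.mem hP hCP hPD)

theorem isHullVertex_sdiff (h : PiercingFree S) (hA : IsHullVertex S A) (hQ : IsInnerPoint S Q)
    (hexit : IsExitEdge S A Q C D) : IsHullVertex (S \ {C, D}) Q := by
  refine (isHullVertex_or_isInnerPoint (hexit.mem_sdiff hQ.mem (by simp))).resolve_right
    fun hinner => ?_
  have hcard := hexit.isHullEdge.card_sdiff_add_two
  have hright := hexit.card_rightOf_sdiff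
  have hSeven := h.even_card
  have hreven := h.even_card_rightOf hA hQ
  obtain ⟨M, hM, hAQM, -⟩ := hinner.exists_piercedAt (h.generalPosition.mono Finset.sdiff_subset)
    (by grind) (hexit.mem_sdiff hA.mem (by simp)) (hA.ne hQ) (by grind)
  exact h.not_piercedAt A _ hA (hM.insert_isHullEdge hexit.isHullEdge) (hexit.piercedAt_insert hAQM)

-- `Q` is a hull vertex once `C` and `D` are removed, so it lies in no triangle `A P X` avoiding
-- both.
theorem rightOf_subset_insert (h : PiercingFree S) (hA : IsHullVertex S A) (hQ : IsInnerPoint S Q)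
    (hexit : IsExitEdge S A Q C D) (hP : P ∈ rightOf S A Q) (hPC : P ≠ C) :
    rightOf S P Q ⊆ insert D ((rightOf S A Q).erase P) := by
  intro X hX
  obtain ⟨hXS, hPQX⟩ := mem_rightOf.1 hX
  obtain ⟨hPS, hAQP⟩ := mem_rightOf.1 hP
  have hXP : X ≠ P := by rintro rfl; simp at hPQX
  have hXQ : X ≠ Q := by rintro rfl; simp at hPQX
  have hXA : X ≠ A := by
    rintro rfl
    linarith [sideOf_rotate X P Q, sideOf_swap_right X P Q]
  rw [Finset.mem_insert, Finset.mem_erase]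
  by_contra! hnot
  obtain ⟨hXD, hXright⟩ := hnot
  have hAQX : 0 < sideOf A Q X := (mem_leftOf.1 <| (h.generalPosition.mem_rightOf_or_mem_leftOf
    hA.mem hQ.mem (hA.ne hQ) hXS hXA hXQ).resolve_left (hXright hXP)).2
  have hXC : X ≠ C := by rintro rfl; exact hAQX.not_gt hexit.sideOf_left
  have hPD : P ≠ D := by rintro rfl; exact hAQP.not_gt hexit.sideOf_right
  have hQXP : 0 < sideOf Q X P := (h.isHullVertex_sdiff hA hQ hexit).sideOf_pos_trans
    (h.generalPosition.mono Finset.sdiff_subset) (X := X) (Y := A) (by simp [hXS, hXC, hXD])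
    (hexit.mem_sdiff hA.mem (by simp)) (by simp [hPS, hPC, hPD])
    (by linarith [sideOf_rotate A Q X])
    (by linarith [sideOf_rotate Q A P, sideOf_swap_left A Q P])
  linarith [sideOf_rotate P Q X]

theorem card_rightOf_le_of_isHullEdge (h : PiercingFree S) (hAB : IsHullEdge S A B)
    (hQ : IsInnerPoint S Q) : #(rightOf S B Q) ≤ #(rightOf S A Q) := by
  have hA := hAB.isHullVertex_left
  have hBmem : B ∈ rightOf S A Q := hAB.right_mem_rightOf hQ
  obtain ⟨C, D, hexit⟩ := hQ.exists_isExitEdge h.generalPosition hA.mem (hA.ne hQ)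
  have hBC : B ≠ C := by
    rintro rfl
    have hrank := (isHullEdge_iff_card_rightOf_eq_zero h.generalPosition hA.mem hAB.right_mem
      hAB.ne).1 hAB
    have hrank' := h.card_rightOf_exit_left hA hQ hexit
    have htwo := h.two_le_card_rightOf hA hQ
    omega
  calc #(rightOf S B Q) ≤ #(insert D ((rightOf S A Q).erase B)) :=
        Finset.card_le_card (h.rightOf_subset_insert hA hQ hexit hBmem hBC)
    _ ≤ #((rightOf S A Q).erase B) + 1 := Finset.card_insert_le _ _
    _ = #(rightOf S A Q) := Finset.card_erase_add_one hBmem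

-- The new vertex `P` is the one of rank `1`. Passing from `A` to `P`, the right side of `Q` gains
-- at most the exit vertex `D` and loses both `P` and the vertex `B` between `A` and `P`.
theorem exists_card_rightOf_lt (h : PiercingFree S) (hA : IsHullVertex S A) (hQ : IsInnerPoint S Q)
    (hfour : 4 ≤ #(rightOf S A Q)) :
    ∃ P, IsHullVertex S P ∧ #(rightOf S P Q) < #(rightOf S A Q) := by
  have hS := h.generalPosition
  have hcard := hS.card_rightOf_add_card_leftOf_add_two hA.mem hQ.mem (hA.ne hQ)
  obtain ⟨B, hAB⟩ := hA.exists_isHullEdge hS (by omega)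
  have hB := hAB.isHullVertex_right
  obtain ⟨P, hPS, hPA, hrank⟩ := hA.exists_card_rightOf_eq hS (j := 1) (by omega)
  have hP := h.isHullVertex_of_odd_card_rightOf hA hPS (hrank ▸ odd_one)
  have hBP := hA.isHullEdge_of_card_rightOf_eq_one hS hAB hP hPA.symm hrank
  obtain ⟨C, D, hexit⟩ := hQ.exists_isExitEdge hS hA.mem (hA.ne hQ)
  have hPC : P ≠ C := by
    rintro rfl
    have := h.card_rightOf_exit_left hA hQ hexit
    omega
  have hBmem : B ∈ rightOf S A Q := hAB.right_mem_rightOf hQ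
  have hPmem : P ∈ rightOf S A Q := by
    have := (hA.card_rightOf_lt_iff hS hPS hQ.mem hPA.symm (hA.ne hQ)).1 (by omega)
    exact mem_rightOf.2 ⟨hPS, by linarith [sideOf_swap_right A P Q]⟩
  have hBnotMem : B ∉ rightOf S P Q := fun hmem => by
    linarith [(mem_rightOf.1 hmem).2, sideOf_rotate B P Q,
      hBP.sideOf_pos Q hQ.mem (hB.ne hQ).symm (hP.ne hQ).symm]
  have hsub : rightOf S P Q ⊆ insert D (((rightOf S A Q).erase P).erase B) := fun X hX => by
    have hXB : X ≠ B := by rintro rfl; exact hBnotMem hX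
    have := h.rightOf_subset_insert hA hQ hexit hPmem hPC hX
    simp_all only [Finset.mem_insert, Finset.mem_erase, ne_eq, not_false_eq_true, true_and]
  refine ⟨P, hP, ?_⟩
  calc #(rightOf S P Q) ≤ #(insert D (((rightOf S A Q).erase P).erase B)) :=
        Finset.card_le_card hsub
    _ ≤ #(((rightOf S A Q).erase P).erase B) + 1 := Finset.card_insert_le _ _
    _ = #((rightOf S A Q).erase P) :=
        Finset.card_erase_add_one (Finset.mem_erase.2 ⟨hBP.ne, hBmem⟩)
    _ < #(rightOf S A Q) := Finset.card_erase_lt_of_mem hPmem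

theorem exists_card_rightOf_eq_two (h : PiercingFree S) (hQ : IsInnerPoint S Q) :
    ∃ A, IsHullVertex S A ∧ #(rightOf S A Q) = 2 := by
  obtain ⟨V, hV⟩ := exists_isHullVertex ⟨Q, hQ.mem⟩
  obtain ⟨A, hA, hmin⟩ := ({A ∈ S | IsHullVertex S A} : Finset Pt).exists_min_image
    (fun A => #(rightOf S A Q)) ⟨V, Finset.mem_filter.2 ⟨hV.mem, hV⟩⟩
  replace hA := (Finset.mem_filter.1 hA).2
  refine ⟨A, hA, ?_⟩
  by_contra hne
  have htwo := h.two_le_card_rightOf hA hQ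
  have heven := h.even_card_rightOf hA hQ
  obtain ⟨P, hP, hlt⟩ := h.exists_card_rightOf_lt hA hQ (by grind)
  exact hlt.not_ge (hmin P (Finset.mem_filter.2 ⟨hP.mem, hP⟩))

-- For `r(X)` the rank of `Q` around `X`: the hull edges `AB`, `BC`, `CD` lead from `r(A) = 2` to
-- `r(D) ≤ 2`, whereas every point left of `AD` counts towards `r(D)`.
theorem card_eq_six (h : PiercingFree S) (hQ : IsInnerPoint S Q) : #S = 6 := by
  have hS := h.generalPosition
  obtain ⟨A, hA, hrankQ⟩ := h.exists_card_rightOf_eq_two hQ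
  have hcard := hS.card_rightOf_add_card_leftOf_add_two hA.mem hQ.mem (hA.ne hQ)
  have hleft := h.two_le_card_leftOf hA hQ
  obtain ⟨C, D, hexit⟩ := hQ.exists_isExitEdge hS hA.mem (hA.ne hQ)
  have hCD := hexit.isHullEdge
  have hrankC := h.card_rightOf_exit_left hA hQ hexit
  have hrankD := h.card_rightOf_exit_right hA hQ hexit
  have hAC : A ≠ C := by rintro rfl; simpa using hexit.sideOf_left
  have hAD : A ≠ D := by rintro rfl; simpa using hexit.sideOf_right
  obtain ⟨B, hAB⟩ := hA.exists_isHullEdge hS (by omega)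
  have hBC : IsHullEdge S B C :=
    hA.isHullEdge_of_card_rightOf_eq_one hS hAB hCD.isHullVertex_left hAC (by omega)
  have hD : #(rightOf S D Q) ≤ 2 :=
    calc #(rightOf S D Q) ≤ #(rightOf S C Q) := h.card_rightOf_le_of_isHullEdge hCD hQ
      _ ≤ #(rightOf S B Q) := h.card_rightOf_le_of_isHullEdge hBC hQ
      _ ≤ #(rightOf S A Q) := h.card_rightOf_le_of_isHullEdge hAB hQ
      _ = 2 := hrankQ
  have hleftD : #(leftOf S A D) ≤ #(rightOf S D Q) := Finset.card_le_card <|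
    hCD.isHullVertex_right.leftOf_subset_rightOf hS hA.mem hQ.mem hexit.sideOf_right
  have hcardD := hS.card_rightOf_add_card_leftOf_add_two hA.mem hCD.right_mem hAD
  have heven := h.even_card
  grind

theorem card_sides_eq_two (h : PiercingFree S) (hA : IsHullVertex S A) (hQ : IsInnerPoint S Q) :
    #(rightOf S A Q) = 2 ∧ #(leftOf S A Q) = 2 := by
  have hcard := h.generalPosition.card_rightOf_add_card_leftOf_add_two hA.mem hQ.mem (hA.ne hQ)
  have hsix := h.card_eq_six hQ
  have hright := h.two_le_card_rightOf hA hQ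
  have hleft := h.two_le_card_leftOf hA hQ
  omega

theorem isHullVertex_of_ne (h : PiercingFree S) (hQ : IsInnerPoint S Q) (hP : P ∈ S)
    (hPQ : P ≠ Q) : IsHullVertex S P := by
  refine (isHullVertex_or_isInnerPoint hP).resolve_right fun hinner => hPQ ?_
  obtain ⟨A, hA⟩ := exists_isHullVertex ⟨Q, hQ.mem⟩
  exact hA.injOn_card_rightOf h.generalPosition
    (Finset.mem_erase.2 ⟨(hA.ne hinner).symm, hP⟩) (Finset.mem_erase.2 ⟨(hA.ne hQ).symm, hQ.mem⟩)
    ((h.card_sides_eq_two hA hinner).1.trans (h.card_sides_eq_two hA hQ).1.symm)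

theorem exists_isHullEdge (h : PiercingFree S) (hA : IsHullVertex S A) :
    ∃ B, IsHullEdge S A B := by
  refine hA.exists_isHullEdge h.generalPosition ?_
  have hpos := Finset.card_pos.2 ⟨A, hA.mem⟩
  have heven := h.even_card
  grind

theorem exceptionalAt (h : PiercingFree S) (hQ : IsInnerPoint S Q) : ExceptionalAt S Q := by
  constructor
  · refine Set.eq_singleton_iff_unique_mem.2
      ⟨⟨hQ.mem, hQ.inOpenTriangle.mem_interior_convexHull⟩, fun P ⟨hP, hint⟩ => ?_⟩
    by_contra hPQ
    obtain ⟨B, hPB⟩ := h.exists_isHullEdge (h.isHullVertex_of_ne hQ hP hPQ)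
    exact hPB.notMem_interior_convexHull (by simp) hint
  · intro P hP hPQ
    change #(leftOf S Q P) = 2 ∧ #(rightOf S Q P) = 2
    rw [leftOf_swap S P Q, rightOf_swap S P Q]
    exact h.card_sides_eq_two (h.isHullVertex_of_ne hQ hP hPQ) hQ

theorem convexPosition (h : PiercingFree S) (hinner : ∀ Q, ¬ IsInnerPoint S Q) :
    ConvexPosition S := by
  intro A hA
  obtain ⟨B, hAB⟩ :=
    h.exists_isHullEdge ((isHullVertex_or_isInnerPoint hA).resolve_right (hinner A))
  exact hAB.notMem_convexHull_erase

end PiercingFree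

end PiercingFree

/-- If a set `S` of `2k` points in general position has exactly
`C_k` non-crossing perfect matchings, then `S` is in convex position, or
`k = 3` and `S` has the exceptional order type. -/
theorem convexPosition_or_exceptional_of_pm_eq_catalan (k : ℕ) (S : Finset Pt)
    (hcard : S.card = 2 * k) (hgp : GeneralPosition S)
    (hpm : pm S = catalan k) :
    ConvexPosition S ∨ (k = 3 ∧ Exceptional S) := by
  have h : PiercingFree S := piercingFree_of_pm_eq_catalan hgp hcard hpm
  by_cases hinner : ∃ Q, IsInnerPoint S Q
  · obtain ⟨Q, hQ⟩ := hinner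
    have hsix : #S = 6 := h.card_eq_six hQ
    exact Or.inr ⟨by omega, Q, hQ.mem, h.exceptionalAt hQ⟩
  · exact Or.inl (h.convexPosition (not_exists.1 hinner))
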